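/- If 1 ≤ k ≤ q/2 then the minimum Hamming distance of the puncture code P(C) of the [q^2+1, k, q^2+2-k]_{q^2} Reed-Solomon code C is 2k. -/

import Mathlib

/-!
Lower bound: for a coordinate `i` and a set `A` of at most `k - 1` other coordinates, some word
of `C` vanishes on `A` but not at `i`. Splitting a set of `2k - 2` coordinates into two halves,
the products `u v^q` do the same for `2k - 2` coordinates, so a nonzero vector orthogonal to all of
them has at least `2k` nonzero coordinates.

Upper bound: take `2k - 1` points `x` of `𝔽_q`, so that `g(x)^q = gᵠ(x)`, where `gᵠ` has the
coefficients of `g` raised to the power `q`. The leading coefficient formula of Lagrange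
interpolation writes the coefficient of `X^(2k-2)` in `f gᵠ`, which is `f_{k-1} g_{k-1}^q`, as a
combination of the values `f(x) g(x)^q` with nonzero weights in `𝔽_q`. Moving `f_{k-1} g_{k-1}^q`
to the other side gives a word of `P(C)` with `2k` nonzero coordinates.
-/

open Polynomial

/-- The codeword of the (extended) `k`-dimensional Reed-Solomon code of length `q² + 1`
associated to a polynomial `f`: the evaluations of `f` at all elements of the field
(enumerated by `a`), followed by the coefficient of `X^(k-1)` in `f`. -/
def rsWord (q k : ℕ) {F : Type} [Field F] (a : Fin (q ^ 2) → F)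
    (f : Polynomial F) (i : Fin (q ^ 2 + 1)) : F :=
  if hi : (i : ℕ) < q ^ 2 then f.eval (a ⟨(i : ℕ), hi⟩) else f.coeff (k - 1)

/-- The puncture code `P(C)` of the `k`-dimensional Reed-Solomon code `C` of length `q² + 1`
over `F = 𝔽_{q²}`: all vectors `λ` with entries in the subfield `𝔽_q` (i.e. `λ_i^q = λ_i`)
such that `∑ λ_i u_i v_i^q = 0` for all codewords `u, v` of `C`. -/
def puncRS (q k : ℕ) {F : Type} [Field F] [Fintype F] (a : Fin (q ^ 2) → F) :
    Set (Fin (q ^ 2 + 1) → F) :=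
  {lam | (∀ i, lam i ^ q = lam i) ∧
    ∀ f g : Polynomial F, f.degree < (k : WithBot ℕ) → g.degree < (k : WithBot ℕ) →
      ∑ i, lam i * rsWord q k a f i * (rsWord q k a g i) ^ q = 0}

/-- The Hamming weight of a vector: the number of its nonzero coordinates. -/
noncomputable def wt {n : ℕ} {F : Type} [Zero F] (v : Fin n → F) : ℕ :=
  Set.ncard {i | v i ≠ 0}

theorem wt_eq_hammingNorm {n : ℕ} {F : Type} [Zero F] [DecidableEq F] (v : Fin n → F) :
    wt v = hammingNorm v := by
  simp [wt, hammingNorm, ← Set.ncard_coe_finset]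

section SeparatesCoords

open scoped Pointwise

variable {ι R : Type*}

/-- A set `C` of words is `m`-separating if it can tell any coordinate `i` apart from any set `A`
of at most `m` other coordinates: some word of `C` vanishes on `A` and not at `i`. For a linear
code over a field this says that the dual code has minimum distance at least `m + 2`. -/
def SeparatesCoords [Zero R] (m : ℕ) (C : Set (ι → R)) : Prop :=
  ∀ (i : ι) (A : Finset ι), A.card ≤ m → i ∉ A → ∃ u ∈ C, (∀ j ∈ A, u j = 0) ∧ u i ≠ 0

theorem SeparatesCoords.image_pow [MonoidWithZero R] [NoZeroDivisors R] {m q : ℕ}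
    {C : Set (ι → R)} (hC : SeparatesCoords m C) (hq : q ≠ 0) :
    SeparatesCoords m ((· ^ q) '' C) := by
  intro i A hA hi
  obtain ⟨u, hu, huA, hui⟩ := hC i A hA hi
  exact ⟨u ^ q, ⟨u, hu, rfl⟩, fun j hj => by simp [huA j hj, hq], pow_ne_zero q hui⟩

theorem SeparatesCoords.mul [MulZeroClass R] [NoZeroDivisors R] {m n : ℕ} {C D : Set (ι → R)}
    (hC : SeparatesCoords m C) (hD : SeparatesCoords n D) : SeparatesCoords (m + n) (C * D) := by
  classical
  intro i A hA hi
  obtain ⟨B, hBA, hB⟩ := Finset.exists_subset_card_eq (min_le_left A.card m)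
  have hAB : (A \ B).card ≤ n := by
    rw [Finset.card_sdiff_of_subset hBA]
    lia
  obtain ⟨u, hu, huB, hui⟩ := hC i B (by lia) (fun h => hi (hBA h))
  obtain ⟨v, hv, hvAB, hvi⟩ := hD i (A \ B) hAB (fun h => hi (Finset.sdiff_subset h))
  refine ⟨u * v, Set.mul_mem_mul hu hv, fun j hj => ?_, mul_ne_zero hui hvi⟩
  by_cases hjB : j ∈ B
  · simp [huB j hjB]
  · simp [hvAB j (Finset.mem_sdiff.2 ⟨hj, hjB⟩)]

theorem SeparatesCoords.lt_hammingNorm [Fintype ι] [DecidableEq R] [NonUnitalNonAssocSemiring R]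
    [NoZeroDivisors R] {m : ℕ} {E : Set (ι → R)} (hE : SeparatesCoords m E) {lam : ι → R}
    (hlam : lam ≠ 0) (horth : ∀ e ∈ E, ∑ i, lam i * e i = 0) : m + 1 < hammingNorm lam := by
  classical
  by_contra! hlt
  obtain ⟨i, hi⟩ := Function.ne_iff.1 hlam
  let A : Finset ι := ({j | lam j ≠ 0} : Finset ι).erase i
  have hA : A.card ≤ m := by
    have : A.card = hammingNorm lam - 1 := Finset.card_erase_of_mem (by simpa using hi)
    lia
  obtain ⟨e, he, heA, hei⟩ := hE i A hA (Finset.notMem_erase i _)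
  have hsum : ∑ j, lam j * e j = lam i * e i := by
    refine Fintype.sum_eq_single i fun j hji => ?_
    by_cases hj : lam j = 0
    · rw [hj, zero_mul]
    · rw [heA j (by simp [A, hji, hj]), mul_zero]
  exact mul_ne_zero hi hei (hsum ▸ horth e he)

end SeparatesCoords

theorem exists_monic_natDegree_eq_forall_eval_eq_zero {ι R : Type*} [CommRing R] [Nontrivial R]
    {s : Finset ι} (v : ι → R) {m : ℕ} (hs : s.card ≤ m) :
    ∃ f : R[X], f.Monic ∧ f.natDegree = m ∧ ∀ i ∈ s, f.eval (v i) = 0 := by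
  have hX : (X ^ (m - s.card) : R[X]).Monic := monic_X_pow _
  have hnodal : (Lagrange.nodal s v).Monic := Lagrange.nodal_monic
  refine ⟨X ^ (m - s.card) * Lagrange.nodal s v, hX.mul hnodal, ?_, fun i hi => ?_⟩
  · rw [hX.natDegree_mul hnodal, natDegree_X_pow, Lagrange.natDegree_nodal, Nat.sub_add_cancel hs]
  · rw [eval_mul, Lagrange.eval_nodal_at_node hi, mul_zero]

section ReedSolomon

open scoped Pointwise

variable {q k : ℕ} {F : Type} [Field F] {a : Fin (q ^ 2) → F}

@[simp]
theorem rsWord_castSucc (f : F[X]) (i : Fin (q ^ 2)) :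
    rsWord q k a f i.castSucc = f.eval (a i) := by
  simp [rsWord]

@[simp]
theorem rsWord_last (f : F[X]) : rsWord q k a f (Fin.last _) = f.coeff (k - 1) := by
  simp [rsWord]

/-- The extended Reed-Solomon code `C` of dimension `k`, as the set of its codewords. -/
def rsCode (q k : ℕ) (a : Fin (q ^ 2) → F) : Set (Fin (q ^ 2 + 1) → F) :=
  rsWord q k a '' {f | f.degree < k}

theorem separatesCoords_rsCode {m : ℕ} (ha : Function.Injective a) :
    SeparatesCoords m (rsCode q (m + 1) a) := by
  classical
  intro i A hA hi
  let B : Finset (Fin (q ^ 2)) := {j | j.castSucc ∈ A}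
  have hBA : B.map Fin.castSuccEmb ⊆ A := fun j hj => by
    obtain ⟨l, hl, rfl⟩ := Finset.mem_map.1 hj
    simpa [B] using hl
  have hB : B.card ≤ A.card := by
    simpa using Finset.card_le_card hBA
  induction i using Fin.lastCases with
  | last =>
    obtain ⟨f, hf, hdeg, hfB⟩ := exists_monic_natDegree_eq_forall_eval_eq_zero a (hB.trans hA)
    refine ⟨_, ⟨f, ?_, rfl⟩, fun j hj => ?_, ?_⟩
    · rw [Set.mem_ofPred_eq, degree_eq_natDegree hf.ne_zero, hdeg]
      exact_mod_cast m.lt_succ_self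
    · obtain ⟨l, rfl⟩ := Fin.exists_castSucc_eq.2 (fun h : j = Fin.last _ => hi (h ▸ hj))
      simpa using hfB l (by simpa [B] using hj)
    · simp [← hdeg, hf]
  | cast i =>
    refine ⟨_, ⟨Lagrange.nodal B a, ?_, rfl⟩, fun j hj => ?_, ?_⟩
    · rw [Set.mem_ofPred_eq, Lagrange.degree_nodal]
      exact_mod_cast Nat.lt_succ_of_le (hB.trans hA)
    · induction j using Fin.lastCases with
      | last =>
        have hBlt : B.card < A.card := by
          simpa using Finset.card_lt_card (Finset.ssubset_iff_subset_ne.2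
            ⟨hBA, fun h => by simp [← h, Fin.castSucc_ne_last] at hj⟩)
        rw [rsWord_last]
        exact coeff_eq_zero_of_natDegree_lt (by rw [Lagrange.natDegree_nodal]; lia)
      | cast j =>
        rw [rsWord_castSucc]
        exact Lagrange.eval_nodal_at_node (by simpa [B] using hj)
    · rw [rsWord_castSucc]
      exact Lagrange.eval_nodal_not_at_node fun j hj h => hi (by simpa [B, ha h] using hj)

theorem mem_puncRS_iff [Fintype F] {lam : Fin (q ^ 2 + 1) → F} :
    lam ∈ puncRS q k a ↔ (∀ i, lam i ^ q = lam i) ∧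
      ∀ e ∈ rsCode q k a * (· ^ q) '' rsCode q k a, ∑ i, lam i * e i = 0 := by
  refine and_congr_right fun _ => ⟨?_, fun h f g hf hg => ?_⟩
  · rintro h _ ⟨_, ⟨f, hf, rfl⟩, _, ⟨_, ⟨g, hg, rfl⟩, rfl⟩, rfl⟩
    simpa [mul_assoc] using h f g hf hg
  · simpa [mul_assoc] using h _ (Set.mul_mem_mul ⟨f, hf, rfl⟩ ⟨_, ⟨g, hg, rfl⟩, rfl⟩)

theorem two_mul_le_wt_of_mem_puncRS [Fintype F] (hq : q ≠ 0) (hk : 1 ≤ k)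
    (ha : Function.Injective a) {lam : Fin (q ^ 2 + 1) → F} (hlam : lam ∈ puncRS q k a)
    (h0 : lam ≠ 0) : 2 * k ≤ wt lam := by
  classical
  obtain ⟨m, rfl⟩ := Nat.exists_eq_add_of_le' hk
  have hC : SeparatesCoords m (rsCode q (m + 1) a) := separatesCoords_rsCode ha
  have hlt := (hC.mul (hC.image_pow hq)).lt_hammingNorm h0 (mem_puncRS_iff.1 hlam).2
  rw [wt_eq_hammingNorm]
  lia

end ReedSolomon

section NodalWeight

variable {ι F : Type*} [DecidableEq ι] [Field F] {s : Finset ι} {v : ι → F}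

theorem sum_nodalWeight_mul_eval (hv : Set.InjOn v s) {P : F[X]} (hP : P.degree < s.card) :
    ∑ i ∈ s, Lagrange.nodalWeight s v i * P.eval (v i) = P.coeff (s.card - 1) := by
  rw [Lagrange.coeff_eq_sum hv hP]
  refine Finset.sum_congr rfl fun i _ => ?_
  rw [Lagrange.nodalWeight, Finset.prod_inv_distrib, div_eq_inv_mul]

variable {σ : F →+* F}

theorem map_nodalWeight_of_fixed (hσ : ∀ i ∈ s, σ (v i) = v i) {i : ι} (hi : i ∈ s) :
    σ (Lagrange.nodalWeight s v i) = Lagrange.nodalWeight s v i := by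
  simp only [Lagrange.nodalWeight, map_prod, map_inv₀, map_sub, hσ i hi]
  exact Finset.prod_congr rfl fun j hj => by rw [hσ j (Finset.mem_of_mem_erase hj)]

theorem sum_nodalWeight_mul_eval_mul_map_eval (hv : Set.InjOn v s)
    (hσ : ∀ i ∈ s, σ (v i) = v i) {m n : ℕ} (hs : s.card = m + n + 1) {f g : F[X]}
    (hf : f.natDegree ≤ m) (hg : g.natDegree ≤ n) :
    ∑ i ∈ s, Lagrange.nodalWeight s v i * (f.eval (v i) * σ (g.eval (v i))) =
      f.coeff m * σ (g.coeff n) := by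
  have hgσ : (g.map σ).natDegree ≤ n := natDegree_map_le.trans hg
  have hdeg : (f * g.map σ).degree < s.card := by
    refine degree_le_natDegree.trans_lt ?_
    rw [hs]
    exact_mod_cast Nat.lt_succ_of_le (natDegree_mul_le_of_le hf hgσ)
  have heval : ∀ i ∈ s, (f * g.map σ).eval (v i) = f.eval (v i) * σ (g.eval (v i)) := by
    intro i hi
    rw [eval_mul, ← eval_map_apply, hσ i hi]
  calc ∑ i ∈ s, Lagrange.nodalWeight s v i * (f.eval (v i) * σ (g.eval (v i)))
      = ∑ i ∈ s, Lagrange.nodalWeight s v i * (f * g.map σ).eval (v i) :=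
        Finset.sum_congr rfl fun i hi => by rw [heval i hi]
    _ = (f * g.map σ).coeff (m + n) := by
        rw [sum_nodalWeight_mul_eval hv hdeg, hs, Nat.add_sub_cancel]
    _ = f.coeff m * σ (g.coeff n) := by
        rw [coeff_mul_add_eq_of_natDegree_le hf hgσ, coeff_map]

end NodalWeight

section NodalWord

variable {F : Type*} [Field F]

/-- The word with the Lagrange weights of the points `v i`, `i ∈ s`, at the coordinates in `s`,
`-1` at the added last coordinate, and `0` elsewhere: the linear relation, given by
interpolation, between the values of a polynomial of degree less than `s.card` at the
points of `s` and its coefficient of degree `s.card - 1`. -/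
def nodalWord {n : ℕ} (s : Finset (Fin n)) (v : Fin n → F) : Fin (n + 1) → F :=
  Fin.snoc (α := fun _ => F) (fun i => if i ∈ s then Lagrange.nodalWeight s v i else 0) (-1)

@[simp]
theorem nodalWord_castSucc {n : ℕ} (s : Finset (Fin n)) (v : Fin n → F) (i : Fin n) :
    nodalWord s v i.castSucc = if i ∈ s then Lagrange.nodalWeight s v i else 0 := by
  simp [nodalWord]

@[simp]
theorem nodalWord_last {n : ℕ} (s : Finset (Fin n)) (v : Fin n → F) :
    nodalWord s v (Fin.last n) = -1 := by
  simp [nodalWord]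

theorem wt_nodalWord {F : Type} [Field F] {n : ℕ} {s : Finset (Fin n)} {v : Fin n → F}
    (hv : Set.InjOn v s) : wt (nodalWord s v) = s.card + 1 := by
  have hsupp : {i | nodalWord s v i ≠ 0} =
      insert (Fin.last n) (Fin.castSucc '' (s : Set (Fin n))) := by
    ext i
    induction i using Fin.lastCases with
    | last => simp
    | cast i =>
      simpa [Fin.castSucc_ne_last] using fun hi => Lagrange.nodalWeight_ne_zero hv hi
  rw [wt, hsupp, Set.ncard_insert_of_notMem (by simp [Fin.castSucc_ne_last]),
    Set.ncard_image_of_injective _ (Fin.castSucc_injective n), Set.ncard_coe_finset]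

theorem nodalWord_mem_puncRS {F : Type} [Field F] [Fintype F] {q k : ℕ} {φ : F →+* F}
    (hφ : ∀ x, φ x = x ^ q) {a : Fin (q ^ 2) → F} {s : Finset (Fin (q ^ 2))} (ha : Set.InjOn a s)
    (hs : ∀ i ∈ s, a i ^ q = a i) (hcard : s.card + 1 = 2 * k) :
    nodalWord s a ∈ puncRS q k a := by
  have hfix : ∀ i ∈ s, φ (a i) = a i := fun i hi => (hφ _).trans (hs i hi)
  refine ⟨fun i => ?_, fun f g hf hg => ?_⟩
  · rw [← hφ]
    induction i using Fin.lastCases with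
    | last => simp
    | cast i =>
      by_cases hi : i ∈ s
      · simpa [hi] using map_nodalWeight_of_fixed hfix hi
      · simp [hi]
  · have hk : k = k - 1 + 1 := by lia
    rw [hk] at hf hg
    have hrel := sum_nodalWeight_mul_eval_mul_map_eval ha hfix (m := k - 1) (n := k - 1) (by lia)
      (natDegree_le_iff_degree_le.2 (Order.lt_succ_iff.1 hf))
      (natDegree_le_iff_degree_le.2 (Order.lt_succ_iff.1 hg))
    simp only [hφ] at hrel
    simp [Fin.sum_univ_castSucc, mul_assoc, ite_mul, hrel]

end NodalWord

section FiniteField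

variable {F : Type*} [Field F] [Fintype F] {q n : ℕ}

theorem exists_charP_pow_eq_of_card_eq_pow (hn : n ≠ 0) (hF : Fintype.card F = q ^ n) :
    ∃ p m : ℕ, p.Prime ∧ CharP F p ∧ m ≠ 0 ∧ q = p ^ m := by
  have hq : IsPrimePow q := (isPrimePow_pow_iff hn).1 (hF ▸ FiniteField.isPrimePow_card F)
  obtain ⟨p, m, hp, hm, rfl⟩ := (isPrimePow_nat_iff q).1 hq
  have := Fact.mk hp
  exact ⟨p, m, hp, charP_of_card_eq_prime_pow (hF.trans (pow_mul p m n).symm), hm.ne', rfl⟩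

theorem exists_ringHom_eq_pow_of_card_eq_pow (hn : n ≠ 0) (hF : Fintype.card F = q ^ n) :
    ∃ φ : F →+* F, ∀ x, φ x = x ^ q := by
  obtain ⟨p, m, hp, _, -, rfl⟩ := exists_charP_pow_eq_of_card_eq_pow hn hF
  have := Fact.mk hp
  exact ⟨iterateFrobenius F p m, iterateFrobenius_def p m⟩

theorem card_filter_pow_eq_self [DecidableEq F] (hn : n ≠ 0) (hF : Fintype.card F = q ^ n) :
    ({x | x ^ q = x} : Finset F).card = q := by
  obtain ⟨p, m, hp, _, hm, hqp⟩ := exists_charP_pow_eq_of_card_eq_pow hn hF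
  have hq : 1 < q := hqp ▸ Nat.one_lt_pow hm hp.one_lt
  have hne : (X ^ q - X : F[X]) ≠ 0 := FiniteField.X_pow_card_sub_X_ne_zero F hq
  have hsep : (X ^ q - X : F[X]).Separable := galois_poly_separable p q (hqp ▸ dvd_pow_self p hm)
  have hsplits : (X ^ q - X : F[X]).Splits := by
    have hdvd : (X ^ q - X : F[X]) ∣ X ^ q ^ n - X := by
      simpa using dvd_pow_pow_sub_self_of_dvd (r := (X : F[X])) (p := q) (one_dvd n)
    have hsplits' : (X ^ q ^ n - X : F[X]).Splits := by
      rw [← hF, ← Nat.card_eq_fintype_card]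
      exact splits_X_pow_nat_card_sub_X
    exact hsplits'.of_dvd (FiniteField.X_pow_card_pow_sub_X_ne_zero F hn hq) hdvd
  have hroots : ({x | x ^ q = x} : Finset F) = (X ^ q - X : F[X]).roots.toFinset := by
    ext x
    simp [hne, sub_eq_zero]
  rw [hroots, Multiset.toFinset_card_of_nodup (nodup_roots hsep), ← hsplits.natDegree_eq_card_roots,
    FiniteField.X_pow_card_sub_X_natDegree_eq F hq]

end FiniteField

theorem min_distance_puncture_RS_small_k_general
    (q k : ℕ) (hk1 : 1 ≤ k) (hk2 : 2 * k ≤ q + 1)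
    (F : Type) [Field F] [Fintype F] (hF : Fintype.card F = q ^ 2)
    (a : Fin (q ^ 2) → F) (ha : Function.Bijective a) :
    (∃ lam ∈ puncRS q k a, lam ≠ 0 ∧ wt lam = 2 * k) ∧
    (∀ lam ∈ puncRS q k a, lam ≠ 0 → 2 * k ≤ wt lam) := by
  classical
  refine ⟨?_, fun lam hlam h0 => two_mul_le_wt_of_mem_puncRS (by lia) hk1 ha.injective hlam h0⟩
  obtain ⟨φ, hφ⟩ := exists_ringHom_eq_pow_of_card_eq_pow two_ne_zero hF
  have hfixed : ({i | a i ^ q = a i} : Finset (Fin (q ^ 2))).card = q := by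
    rw [Finset.card_bijective a ha (t := {x | x ^ q = x}) (by simp),
      card_filter_pow_eq_self two_ne_zero hF]
  obtain ⟨s, hs, hcard⟩ : ∃ s ⊆ ({i | a i ^ q = a i} : Finset _), s.card = 2 * k - 1 :=
    Finset.exists_subset_card_eq (by lia)
  have hwt : wt (nodalWord s a) = 2 * k := by
    rw [wt_nodalWord ha.injective.injOn]
    lia
  refine ⟨nodalWord s a, nodalWord_mem_puncRS hφ ha.injective.injOn
    (fun i hi => by simpa using hs hi) (by lia), fun h => ?_, hwt⟩
  simpa using congrFun h (Fin.last _)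

/-- If `1 ≤ k ≤ q/2` then the minimum Hamming distance of the puncture code
`P(C)` of the `[q²+1, k, q²+2-k]_{q²}` Reed-Solomon code `C` is `2k`: there is a nonzero
element of `P(C)` of weight `2k`, and every nonzero element of `P(C)` has weight at least
`2k`. -/
theorem min_distance_puncture_RS_small_k
    (q k : ℕ) (hq : IsPrimePow q) (hk1 : 1 ≤ k) (hk2 : 2 * k ≤ q)
    (F : Type) [Field F] [Fintype F] (hF : Fintype.card F = q ^ 2)
    (a : Fin (q ^ 2) → F) (ha : Function.Bijective a) :
    (∃ lam ∈ puncRS q k a, lam ≠ 0 ∧ wt lam = 2 * k) ∧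
    (∀ lam ∈ puncRS q k a, lam ≠ 0 → 2 * k ≤ wt lam) :=
  min_distance_puncture_RS_small_k_general q k hk1 (by lia) F hF a ha
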